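/- arXiv:1404.1477 — 4 statements merged into one kernel-verified Lean document; each statement's English description precedes it below -/
import Mathlib

section
/- Let H and K be complex Hilbert spaces, V : H → K a linear isometry, and E a bounded operator on K which is an orthogonal projection (E self-adjoint with E² = E). If the compression V* E V is an orthogonal projection on H, then E commutes with the projection Q = V V* onto the range of V, i.e., E Q = Q E. -/
open ContinuousLinearMap

noncomputable section

open scoped InnerProductSpace

/-!
Since `C = V* E V` is a projection and `E² ≤ E`, `‖C x‖² = ⟪C x, x⟫ = ⟪E V x, V x⟫ ≥ ‖E V x‖²`.
So the contraction `V*` attains its norm at every vector `E V x`, and a contraction can do so only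
at vectors fixed by `V V*`. Hence `V V* E V = E V`, so `E V V*` equals the self-adjoint operator
`V V* E V V*`, and two self-adjoint operators commute as soon as their product is self-adjoint.
-/

section Compression

variable {𝕜 H K : Type*} [RCLike 𝕜] [NormedAddCommGroup H] [InnerProductSpace 𝕜 H]
  [NormedAddCommGroup K] [InnerProductSpace 𝕜 K]

theorem norm_apply_sq_le_re_inner_of_isPositive_of_norm_le_one {E : K →L[𝕜] K}
    (hE : E.IsPositive) (hE_le : ‖E‖ ≤ 1) (y : K) : ‖E y‖ ^ 2 ≤ RCLike.re ⟪E y, y⟫_𝕜 := by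
  -- `E - E² = (1 - E) E (1 - E) + E (1 - E) E` is a sum of positive operators.
  have h_contr : RCLike.re ⟪E (E y), E y⟫_𝕜 ≤ ‖E y‖ ^ 2 :=
    calc RCLike.re ⟪E (E y), E y⟫_𝕜 ≤ ‖E (E y)‖ * ‖E y‖ := re_inner_le_norm _ _
      _ ≤ ‖E y‖ * ‖E y‖ := by
        gcongr
        simpa only [one_mul] using E.le_of_opNorm_le hE_le (E y)
      _ = ‖E y‖ ^ 2 := (sq _).symm
  have h_expand : RCLike.re ⟪E (y - E y), y - E y⟫_𝕜 =
      RCLike.re ⟪E y, y⟫_𝕜 - 2 * ‖E y‖ ^ 2 + RCLike.re ⟪E (E y), E y⟫_𝕜 := by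
    have h_symm : ⟪E (E y), y⟫_𝕜 = ⟪E y, E y⟫_𝕜 := hE.inner_left_eq_inner_right (E y) y
    simp only [map_sub, inner_sub_left, inner_sub_right, h_symm, inner_self_eq_norm_sq]
    ring
  linarith [hE.re_inner_nonneg_left (y - E y)]

variable [CompleteSpace H] [CompleteSpace K]

theorem adjoint_apply_apply_eq_self_of_norm_le {T : H →L[𝕜] K} (hT : ‖T‖ ≤ 1) {x : H}
    (hx : ‖x‖ ≤ ‖T x‖) : adjoint T (T x) = x := by
  have hTx : ‖T x‖ ≤ ‖x‖ := by simpa only [one_mul] using T.le_of_opNorm_le hT x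
  have hT' : ‖adjoint T‖ ≤ 1 := by rwa [LinearIsometryEquiv.norm_map]
  refine eq_of_norm_le_re_inner_eq_norm_sq (𝕜 := 𝕜) ?_ ?_
  · calc
      ‖adjoint T (T x)‖ ≤ ‖T x‖ := by
        simpa only [one_mul] using (adjoint T).le_of_opNorm_le hT' (T x)
      _ ≤ ‖x‖ := hTx
  · rw [adjoint_inner_left, inner_self_eq_norm_sq, hTx.antisymm hx]

theorem norm_apply_le_norm_compression_apply {V : H →L[𝕜] K} {E : K →L[𝕜] K}
    (hE : E.IsPositive) (hE_le : ‖E‖ ≤ 1) (hC : IsIdempotentElem (adjoint V ∘L E ∘L V)) (x : H) :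
    ‖E (V x)‖ ≤ ‖adjoint V (E (V x))‖ := by
  have hC_adj : adjoint (adjoint V ∘L E ∘L V) = adjoint V ∘L E ∘L V :=
    (hE.adjoint_conj V).isSelfAdjoint.adjoint_eq
  refine le_of_sq_le_sq ?_ (norm_nonneg _)
  calc ‖E (V x)‖ ^ 2 ≤ RCLike.re ⟪E (V x), V x⟫_𝕜 :=
        norm_apply_sq_le_re_inner_of_isPositive_of_norm_le_one hE hE_le (V x)
    _ = RCLike.re ⟪(adjoint V ∘L E ∘L V) x, x⟫_𝕜 := by
        rw [comp_apply, comp_apply, adjoint_inner_left]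
    _ = ‖(adjoint V ∘L E ∘L V) x‖ ^ 2 := by
        rw [apply_norm_sq_eq_inner_adjoint_left, hC_adj, ← mul_def, hC.eq]

theorem comp_adjoint_comp_eq_of_isIdempotentElem_compression {V : H →L[𝕜] K} {E : K →L[𝕜] K}
    (hV : ‖V‖ ≤ 1) (hE : E.IsPositive) (hE_le : ‖E‖ ≤ 1)
    (hC : IsIdempotentElem (adjoint V ∘L E ∘L V)) :
    V ∘L adjoint V ∘L E ∘L V = E ∘L V := by
  have hV' : ‖adjoint V‖ ≤ 1 := by rwa [LinearIsometryEquiv.norm_map]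
  ext x
  simpa only [adjoint_adjoint, comp_apply] using
    adjoint_apply_apply_eq_self_of_norm_le hV' (norm_apply_le_norm_compression_apply hE hE_le hC x)

theorem projection_compression_projection_commutes_general {V : H →L[𝕜] K} {E : K →L[𝕜] K}
    (hV : ‖V‖ ≤ 1) (hE : E.IsPositive) (hE_le : ‖E‖ ≤ 1)
    (hC : IsIdempotentElem (adjoint V ∘L E ∘L V)) :
    Commute E (V ∘L adjoint V) := by
  have hQ : IsSelfAdjoint (V ∘L adjoint V) := (isPositive_self_comp_adjoint V).isSelfAdjoint
  have hEQ : E * (V ∘L adjoint V) = (V ∘L adjoint V) ∘L E ∘L (V ∘L adjoint V) :=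
    congr($(comp_adjoint_comp_eq_of_isIdempotentElem_compression hV hE hE_le hC) ∘L adjoint V).symm
  rw [hE.isSelfAdjoint.commute_iff hQ, hEQ]
  simpa only [hQ.adjoint_eq] using hE.isSelfAdjoint.conj_adjoint (V ∘L adjoint V)

end Compression

/-- If `E` is an orthogonal projection on `K` and its compression
`V* E V` to `H` (along a linear isometry `V : H → K`) is an orthogonal projection,
then `E` commutes with the projection `Q = V V*` onto the range of `V`. -/
theorem projection_compression_projection_commutes
    {H K : Type*} [NormedAddCommGroup H] [InnerProductSpace ℂ H] [CompleteSpace H]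
    [NormedAddCommGroup K] [InnerProductSpace ℂ K] [CompleteSpace K]
    (V : H →ₗᵢ[ℂ] K) (E : K →L[ℂ] K)
    (hEsa : IsSelfAdjoint E) (hEidem : E ∘L E = E)
    (hCsa : IsSelfAdjoint
      (adjoint V.toContinuousLinearMap ∘L E ∘L V.toContinuousLinearMap))
    (hCidem :
      (adjoint V.toContinuousLinearMap ∘L E ∘L V.toContinuousLinearMap) ∘L
          (adjoint V.toContinuousLinearMap ∘L E ∘L V.toContinuousLinearMap) =
        adjoint V.toContinuousLinearMap ∘L E ∘L V.toContinuousLinearMap) :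
    E ∘L (V.toContinuousLinearMap ∘L adjoint V.toContinuousLinearMap) =
      (V.toContinuousLinearMap ∘L adjoint V.toContinuousLinearMap) ∘L E := by
  have hE : IsStarProjection E := ⟨hEidem, hEsa⟩
  exact projection_compression_projection_commutes_general V.norm_toContinuousLinearMap_le
    (.of_isStarProjection hE) hE.norm_le hCidem
end
end

section
/- Let A₁ and A₂ be effects on a complex Hilbert space H. Then A₁ and A₂ are compatible if and only if there exist a complex Hilbert space K, a linear isometry V : H → K, and two orthogonal projections P₁, P₂ on K with P₁P₂ = P₂P₁, such that A₁ = V* P₁ V and A₂ = V* P₂ V. -/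
open ContinuousLinearMap

noncomputable section

/-- Two effects `A₁`, `A₂` are compatible if the two-outcome POVMs `{A₁, 1−A₁}` and
`{A₂, 1−A₂}` admit a joint POVM, i.e. there are four positive operators `G₀₀, G₀₁, G₁₀, G₁₁`
summing to `1` with `G₁₁ + G₁₀ = A₁` and `G₁₁ + G₀₁ = A₂`. -/
def EffectCompatible {H : Type*} [NormedAddCommGroup H] [InnerProductSpace ℂ H]
    [CompleteSpace H] (A₁ A₂ : H →L[ℂ] H) : Prop :=
  ∃ G₀₀ G₀₁ G₁₀ G₁₁ : H →L[ℂ] H,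
    G₀₀.IsPositive ∧ G₀₁.IsPositive ∧ G₁₀.IsPositive ∧ G₁₁.IsPositive ∧
    G₀₀ + G₀₁ + G₁₀ + G₁₁ = 1 ∧ G₁₁ + G₁₀ = A₁ ∧ G₁₁ + G₀₁ = A₂

universe u

/-! A joint POVM `(Gᵢ)` of `A₁` and `A₂` has a Naimark dilation on a direct sum of copies of `H`,
one for each outcome: writing `Gᵢ = Sᵢ* Sᵢ`, the map `x ↦ (Sᵢ x)ᵢ` is an isometry because
`∑ Gᵢ = 1`, and it compresses the projection onto the coordinates in `s` to `∑ i ∈ s, Gᵢ`.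
Coordinate projections commute, and the marginals `A₁`, `A₂` are two such sums. Conversely,
commuting effects are compatible through their products, and compressing by an isometry preserves
compatibility. -/

section DirectSum

variable {𝕜 ι : Type*} [RCLike 𝕜] {E : ι → Type*} [∀ i, NormedAddCommGroup (E i)]
  [∀ i, InnerProductSpace 𝕜 (E i)]

variable (𝕜 E) in
/-- The orthogonal projection of a Hilbert direct sum onto the summands with index in `s`,
as a continuous linear endomorphism: it replaces all other coordinates by `0`. -/
def coordProjection [DecidableEq ι] (s : Finset ι) : PiLp 2 E →L[𝕜] PiLp 2 E :=
  (PiLp.continuousLinearEquiv 2 𝕜 E).symm.toContinuousLinearMap ∘L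
    ContinuousLinearMap.pi fun i => if i ∈ s then PiLp.proj 2 E i else 0

/-- The operator `x ↦ (Sᵢ x)ᵢ` into the Hilbert direct sum of the codomains of a family `S`,
i.e. the column of operators with entries `Sᵢ`. -/
def columnMap {H : Type*} [NormedAddCommGroup H] [InnerProductSpace 𝕜 H]
    (S : ∀ i, H →L[𝕜] E i) : H →L[𝕜] PiLp 2 E :=
  (PiLp.continuousLinearEquiv 2 𝕜 E).symm.toContinuousLinearMap ∘L ContinuousLinearMap.pi S

@[simp]
lemma columnMap_apply {H : Type*} [NormedAddCommGroup H] [InnerProductSpace 𝕜 H]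
    (S : ∀ i, H →L[𝕜] E i) (x : H) (i : ι) : columnMap S x i = S i x :=
  rfl

variable [DecidableEq ι]

@[simp]
lemma coordProjection_apply (s : Finset ι) (x : PiLp 2 E) (i : ι) :
    coordProjection 𝕜 E s x i = if i ∈ s then x i else 0 := by
  by_cases hi : i ∈ s <;> simp [coordProjection, hi]

lemma coordProjection_mul (s t : Finset ι) :
    coordProjection 𝕜 E s * coordProjection 𝕜 E t = coordProjection 𝕜 E (s ∩ t) := by
  ext x i
  simp [ite_and]

lemma commute_coordProjection (s t : Finset ι) :
    Commute (coordProjection 𝕜 E s) (coordProjection 𝕜 E t) := by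
  rw [commute_iff_eq, coordProjection_mul, coordProjection_mul, Finset.inter_comm]

variable [Fintype ι]

lemma coordProjection_univ : coordProjection 𝕜 E Finset.univ = 1 := by
  ext x i
  simp

variable [∀ i, CompleteSpace (E i)]

lemma isStarProjection_coordProjection (s : Finset ι) :
    IsStarProjection (coordProjection 𝕜 E s) where
  isIdempotentElem := by rw [IsIdempotentElem, coordProjection_mul, Finset.inter_self]
  isSelfAdjoint := by
    rw [isSelfAdjoint_iff_isSymmetric]
    intro x y
    simp only [coe_coe, PiLp.inner_apply, coordProjection_apply]
    refine Finset.sum_congr rfl fun i _ => ?_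
    split_ifs <;> simp

variable {H : Type*} [NormedAddCommGroup H] [InnerProductSpace 𝕜 H] [CompleteSpace H]

lemma adjoint_columnMap_comp_coordProjection_comp_columnMap (S : ∀ i, H →L[𝕜] E i)
    (s : Finset ι) :
    adjoint (columnMap S) ∘L coordProjection 𝕜 E s ∘L columnMap S =
      ∑ i ∈ s, adjoint (S i) ∘L S i := by
  ext y
  refine ext_inner_left 𝕜 fun x => ?_
  simp [adjoint_inner_right, PiLp.inner_apply, sum_apply, inner_sum, apply_ite]

end DirectSum

section Compatibility

variable {H K : Type*} [NormedAddCommGroup H] [InnerProductSpace ℂ H] [CompleteSpace H]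
  [NormedAddCommGroup K] [InnerProductSpace ℂ K] [CompleteSpace K]

theorem exists_linearIsometry_compression_coordProjection_eq_sum {ι : Type*} [Fintype ι]
    [DecidableEq ι] (G : ι → H →L[ℂ] H) (hG : ∀ i, (G i).IsPositive) (hsum : ∑ i, G i = 1) :
    ∃ V : H →ₗᵢ[ℂ] PiLp 2 (fun _ : ι => H), ∀ s : Finset ι,
      adjoint V.toContinuousLinearMap ∘L coordProjection ℂ (fun _ => H) s ∘L
        V.toContinuousLinearMap = ∑ i ∈ s, G i := by
  have exists_factor (i : ι) : ∃ S : H →L[ℂ] H, G i = star S * S :=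
    CStarAlgebra.nonneg_iff_eq_star_mul_self.mp ((nonneg_iff_isPositive _).mpr (hG i))
  choose S hS using exists_factor
  have compression (s : Finset ι) :
      adjoint (columnMap S) ∘L coordProjection ℂ (fun _ => H) s ∘L columnMap S =
        ∑ i ∈ s, G i := by
    rw [adjoint_columnMap_comp_coordProjection_comp_columnMap]
    exact Finset.sum_congr rfl fun i _ => (hS i).symm
  have adjoint_comp_self : adjoint (columnMap S) ∘L columnMap S = 1 := by
    rw [← hsum, ← compression, coordProjection_univ, one_def, id_comp]
  exact ⟨⟨(columnMap S).toLinearMap, (norm_map_iff_adjoint_comp_self _).mpr adjoint_comp_self⟩,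
    compression⟩

theorem effectCompatible_of_commute {A₁ A₂ : H →L[ℂ] H}
    (h₁pos : 0 ≤ A₁) (h₁le : A₁ ≤ 1) (h₂pos : 0 ≤ A₂) (h₂le : A₂ ≤ 1) (hcomm : Commute A₁ A₂) :
    EffectCompatible A₁ A₂ := by
  have hcomm_left : Commute (1 - A₁) A₂ := (Commute.one_left _).sub_left hcomm
  have hcomm_right : Commute A₁ (1 - A₂) := (Commute.one_right _).sub_right hcomm
  have hcomm_both : Commute (1 - A₁) (1 - A₂) := (Commute.one_right _).sub_right hcomm_left
  simp only [EffectCompatible, ← nonneg_iff_isPositive]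
  exact ⟨(1 - A₁) * (1 - A₂), (1 - A₁) * A₂, A₁ * (1 - A₂), A₁ * A₂,
    hcomm_both.mul_nonneg (sub_nonneg.mpr h₁le) (sub_nonneg.mpr h₂le),
    hcomm_left.mul_nonneg (sub_nonneg.mpr h₁le) h₂pos,
    hcomm_right.mul_nonneg h₁pos (sub_nonneg.mpr h₂le),
    hcomm.mul_nonneg h₁pos h₂pos,
    by noncomm_ring, by noncomm_ring, by noncomm_ring⟩

theorem EffectCompatible.compression {B₁ B₂ : K →L[ℂ] K} (hB : EffectCompatible B₁ B₂)
    (V : H →ₗᵢ[ℂ] K) :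
    EffectCompatible (adjoint V.toContinuousLinearMap ∘L B₁ ∘L V.toContinuousLinearMap)
      (adjoint V.toContinuousLinearMap ∘L B₂ ∘L V.toContinuousLinearMap) := by
  obtain ⟨G₀₀, G₀₁, G₁₀, G₁₁, h₀₀, h₀₁, h₁₀, h₁₁, hsum, rfl, rfl⟩ := hB
  refine ⟨_, _, _, _, h₀₀.adjoint_conj V.toContinuousLinearMap,
    h₀₁.adjoint_conj V.toContinuousLinearMap, h₁₀.adjoint_conj V.toContinuousLinearMap,
    h₁₁.adjoint_conj V.toContinuousLinearMap, ?_, ?_, ?_⟩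
  · simp only [← comp_add, ← add_comp, hsum]
    rw [one_def, id_comp]
    exact (norm_map_iff_adjoint_comp_self _).mp V.norm_map
  · simp only [comp_add, add_comp]
  · simp only [comp_add, add_comp]

theorem EffectCompatible.exists_jointPOVM {A₁ A₂ : H →L[ℂ] H} (hA : EffectCompatible A₁ A₂) :
    ∃ G : Fin 2 × Fin 2 → H →L[ℂ] H, (∀ i, (G i).IsPositive) ∧ ∑ i, G i = 1 ∧
      ∑ i ∈ {1} ×ˢ Finset.univ, G i = A₁ ∧ ∑ i ∈ Finset.univ ×ˢ {1}, G i = A₂ := by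
  obtain ⟨G₀₀, G₀₁, G₁₀, G₁₁, h₀₀, h₀₁, h₁₀, h₁₁, hsum, hA₁, hA₂⟩ := hA
  refine ⟨fun i => !![G₀₀, G₀₁; G₁₀, G₁₁] i.1 i.2, ?_, ?_, ?_, ?_⟩
  · simp [Prod.forall, Fin.forall_fin_two, h₀₀, h₀₁, h₁₀, h₁₁]
  · simp [Fintype.sum_prod_type, ← hsum, add_assoc]
  · simp [← hA₁, add_comm]
  · simp [← hA₂, add_comm]

end Compatibility

/-- Two effects are compatible iff they can be dilated to two commuting
orthogonal projections in a larger Hilbert space. -/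
theorem effects_compatible_iff_commuting_projection_dilations
    {H : Type u} [NormedAddCommGroup H] [InnerProductSpace ℂ H] [CompleteSpace H]
    (A₁ A₂ : H →L[ℂ] H)
    (h₁pos : A₁.IsPositive) (h₁le : (1 - A₁).IsPositive)
    (h₂pos : A₂.IsPositive) (h₂le : (1 - A₂).IsPositive) :
    EffectCompatible A₁ A₂ ↔
      ∃ (K : Type u) (_ : NormedAddCommGroup K) (_ : InnerProductSpace ℂ K)
        (_ : CompleteSpace K) (V : H →ₗᵢ[ℂ] K) (P₁ P₂ : K →L[ℂ] K),
        IsSelfAdjoint P₁ ∧ P₁ ∘L P₁ = P₁ ∧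
        IsSelfAdjoint P₂ ∧ P₂ ∘L P₂ = P₂ ∧
        P₁ ∘L P₂ = P₂ ∘L P₁ ∧
        A₁ = adjoint V.toContinuousLinearMap ∘L P₁ ∘L V.toContinuousLinearMap ∧
        A₂ = adjoint V.toContinuousLinearMap ∘L P₂ ∘L V.toContinuousLinearMap := by
  constructor
  · intro hA
    obtain ⟨G, hG, hsum, hA₁, hA₂⟩ := hA.exists_jointPOVM
    obtain ⟨V, hV⟩ := exists_linearIsometry_compression_coordProjection_eq_sum G hG hsum
    have hP (s) := isStarProjection_coordProjection (𝕜 := ℂ) (E := fun _ : Fin 2 × Fin 2 => H) s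
    exact ⟨PiLp 2 (fun _ : Fin 2 × Fin 2 => H), inferInstance, inferInstance, inferInstance, V,
      coordProjection ℂ _ ({1} ×ˢ Finset.univ), coordProjection ℂ _ (Finset.univ ×ˢ {1}),
      (hP _).isSelfAdjoint, (hP _).isIdempotentElem, (hP _).isSelfAdjoint,
      (hP _).isIdempotentElem, commute_coordProjection _ _,
      by rw [hV, hA₁], by rw [hV, hA₂]⟩
  · rintro ⟨K, _, _, _, V, P₁, P₂, hP₁sa, hP₁idem, hP₂sa, hP₂idem, hcomm, rfl, rfl⟩
    have hP₁ : IsStarProjection P₁ := ⟨hP₁idem, hP₁sa⟩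
    have hP₂ : IsStarProjection P₂ := ⟨hP₂idem, hP₂sa⟩
    exact (effectCompatible_of_commute hP₁.nonneg hP₁.le_one hP₂.nonneg hP₂.le_one
      hcomm).compression V
end
end

section
/- Let A₁ and A₂ be effects on a complex Hilbert space H, and set B₁ = √(A₁(1−A₁)) and B₂ = √(A₂(1−A₂)), the positive square roots of the positive operators A₁(1−A₁) and A₂(1−A₂). If A₁A₂ + B₁B₂ = A₂A₁ + B₂B₁ and A₁B₂ + B₁(1−A₂) = A₂B₁ + B₂(1−A₁), then A₁ and A₂ are compatible. -/
open ContinuousLinearMap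

noncomputable section

/-!
Two commuting projections `P₁`, `P₂` on `H ⊕ H` have the joint POVM consisting of the projections
`P₁P₂`, `P₁(1 − P₂)`, `(1 − P₁)P₂` and `(1 − P₁)(1 − P₂)`. Compressing it to the first summand gives
a joint POVM for the corners of `P₁` and `P₂`. An effect `A` is the corner of the projection with
rows `(A, B)` and `(B, 1 − A)`, where `B = √(A(1 − A))`, and the two hypotheses relating the
effects say exactly that these projections commute.
-/

/-- The canonical dilation of an effect `A`, as a `2 × 2` operator matrix: for `B = √(A(1 − A))` it
is a projection on `H ⊕ H` whose upper left corner is `A`. The off-diagonal entry `B` is an argument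
so that the notion makes sense in any ring. -/
def canonicalDilation {R : Type*} [Ring R] (A B : R) : Matrix (Fin 2) (Fin 2) R :=
  !![A, B; B, 1 - A]

lemma canonicalDilation_zero_zero {R : Type*} [Ring R] (A B : R) :
    canonicalDilation A B 0 0 = A :=
  rfl

lemma isStarProjection_canonicalDilation {R : Type*} [Ring R] [StarRing R] {A B : R}
    (hA : IsSelfAdjoint A) (hB : IsSelfAdjoint B) (hAB : Commute A B)
    (hsq : B * B = A * (1 - A)) : IsStarProjection (canonicalDilation A B) where
  isIdempotentElem := by
    have h₀₀ : A * A + B * B = A := by rw [hsq]; noncomm_ring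
    have h₀₁ : A * B + B * (1 - A) = B := by rw [hAB.eq]; noncomm_ring
    have h₁₀ : B * A + (1 - A) * B = B := by rw [← hAB.eq]; noncomm_ring
    have h₁₁ : B * B + (1 - A) * (1 - A) = 1 - A := by rw [hsq]; noncomm_ring
    rw [IsIdempotentElem, canonicalDilation, Matrix.mul_fin_two, h₀₀, h₀₁, h₁₀, h₁₁]
  isSelfAdjoint := by
    rw [isSelfAdjoint_iff, canonicalDilation, Matrix.star_eq_conjTranspose]
    ext i j
    fin_cases i <;> fin_cases j <;> simp [hA.star_eq, hB.star_eq]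

lemma commute_canonicalDilation_iff {R : Type*} [Ring R] {A₁ A₂ B₁ B₂ : R} :
    Commute (canonicalDilation A₁ B₁) (canonicalDilation A₂ B₂) ↔
      A₁ * A₂ + B₁ * B₂ = A₂ * A₁ + B₂ * B₁ ∧
        A₁ * B₂ + B₁ * (1 - A₂) = A₂ * B₁ + B₂ * (1 - A₁) := by
  rw [commute_iff_eq, canonicalDilation, canonicalDilation, Matrix.mul_fin_two,
    Matrix.mul_fin_two]
  constructor
  · intro h
    exact ⟨congrFun₂ h 0 0, congrFun₂ h 0 1⟩
  · rintro ⟨h₀₀, h₀₁⟩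
    have h₁₀ : B₁ * A₂ + (1 - A₁) * B₂ = B₂ * A₁ + (1 - A₂) * B₁ := by
      linear_combination (norm := noncomm_ring) -h₀₁
    have h₁₁ : B₁ * B₂ + (1 - A₁) * (1 - A₂) = B₂ * B₁ + (1 - A₂) * (1 - A₁) := by
      linear_combination (norm := noncomm_ring) h₀₀
    rw [h₀₀, h₀₁, h₁₀, h₁₁]

lemma diag_nonneg_of_isStarProjection {n R : Type*} [Fintype n] [Ring R] [PartialOrder R]
    [StarRing R] [StarOrderedRing R] {P : Matrix n n R} (hP : IsStarProjection P) (i : n) :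
    0 ≤ P i i := by
  have hfactor : P.conjTranspose * P = P := by
    rw [← Matrix.star_eq_conjTranspose, hP.isSelfAdjoint.star_eq, hP.isIdempotentElem.eq]
  exact hfactor ▸ (Matrix.posSemidef_conjTranspose_mul_self P).diag_nonneg

lemma commute_of_commute_mul_self {R : Type*} [NonUnitalRing R] [StarRing R]
    [PartialOrder R] [StarOrderedRing R] [TopologicalSpace R] [IsTopologicalRing R] [T2Space R]
    [Module ℝ R] [IsScalarTower ℝ R R] [SMulCommClass ℝ R R] [NonnegSpectrumClass ℝ R]
    [NonUnitalContinuousFunctionalCalculus ℝ R IsSelfAdjoint] {a b : R}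
    (hb : 0 ≤ b) (h : Commute a (b * b)) : Commute a b := by
  have hsqrt : Commute (CFC.sqrt (b * b)) a := h.symm.cfcₙ_nnreal _
  exact (CFC.sqrt_mul_self b hb ▸ hsqrt).symm

section Operator

variable {H : Type*} [NormedAddCommGroup H] [InnerProductSpace ℂ H] [CompleteSpace H]

lemma effectCompatible_diag_of_commute {n : Type*} [Fintype n]
    {P Q : Matrix n n (H →L[ℂ] H)} (hP : IsStarProjection P) (hQ : IsStarProjection Q)
    (hPQ : Commute P Q) (i : n) : EffectCompatible (P i i) (Q i i) := by
  classical
  have diag_mul_isPositive {P' Q' : Matrix n n (H →L[ℂ] H)} (hP' : IsStarProjection P')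
      (hQ' : IsStarProjection Q') (h : Commute P' Q') : ((P' * Q') i i).IsPositive :=
    (nonneg_iff_isPositive _).1 (diag_nonneg_of_isStarProjection (hP'.mul hQ' h) i)
  have hP_compl : Commute P (1 - Q) := (Commute.one_right P).sub_right hPQ
  have hQ_compl : Commute (1 - P) Q := (Commute.one_left Q).sub_left hPQ
  have h_compl : Commute (1 - P) (1 - Q) := (Commute.one_right _).sub_right hQ_compl
  have hsum : (1 - P) * (1 - Q) + (1 - P) * Q + P * (1 - Q) + P * Q = 1 := by noncomm_ring
  refine ⟨((1 - P) * (1 - Q)) i i, ((1 - P) * Q) i i, (P * (1 - Q)) i i, (P * Q) i i,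
    diag_mul_isPositive hP.one_sub hQ.one_sub h_compl, diag_mul_isPositive hP.one_sub hQ hQ_compl,
    diag_mul_isPositive hP hQ.one_sub hP_compl, diag_mul_isPositive hP hQ hPQ, ?_, ?_, ?_⟩
  all_goals simp only [← Matrix.add_apply]
  · rw [hsum, Matrix.one_apply_eq]
  · rw [← mul_add, add_sub_cancel, mul_one]
  · rw [← add_mul, add_sub_cancel, one_mul]

lemma commute_of_isPositive_of_mul_self_eq {A B : H →L[ℂ] H} (hB : B.IsPositive)
    (hsq : B * B = A * (1 - A)) : Commute A B := by
  have hA : Commute A (A * (1 - A)) :=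
    (Commute.refl A).mul_right ((Commute.one_right A).sub_right (Commute.refl A))
  exact commute_of_commute_mul_self ((nonneg_iff_isPositive B).2 hB) (hsq ▸ hA)

theorem effects_compatible_of_commuting_canonical_dilations_general {A₁ A₂ B₁ B₂ : H →L[ℂ] H}
    (hA₁ : IsSelfAdjoint A₁) (hA₂ : IsSelfAdjoint A₂)
    (hB₁ : IsSelfAdjoint B₁) (hB₂ : IsSelfAdjoint B₂)
    (hAB₁ : Commute A₁ B₁) (hAB₂ : Commute A₂ B₂)
    (hB₁sq : B₁ * B₁ = A₁ * (1 - A₁)) (hB₂sq : B₂ * B₂ = A₂ * (1 - A₂))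
    (hcond₁ : A₁ * A₂ + B₁ * B₂ = A₂ * A₁ + B₂ * B₁)
    (hcond₂ : A₁ * B₂ + B₁ * (1 - A₂) = A₂ * B₁ + B₂ * (1 - A₁)) :
    EffectCompatible A₁ A₂ := by
  have hP₁ := isStarProjection_canonicalDilation hA₁ hB₁ hAB₁ hB₁sq
  have hP₂ := isStarProjection_canonicalDilation hA₂ hB₂ hAB₂ hB₂sq
  have hcomm := commute_canonicalDilation_iff.2 ⟨hcond₁, hcond₂⟩
  simpa only [canonicalDilation_zero_zero] using effectCompatible_diag_of_commute hP₁ hP₂ hcomm 0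

end Operator

/-- Let `B_i = √(A_i(1−A_i))` (the positive square root, characterized
by `B_i` positive with `B_i² = A_i(1−A_i)`). If `A₁A₂ + B₁B₂ = A₂A₁ + B₂B₁` and
`A₁B₂ + B₁(1−A₂) = A₂B₁ + B₂(1−A₁)`, then the effects `A₁` and `A₂` are compatible. -/
theorem effects_compatible_of_commuting_canonical_dilations
    {H : Type*} [NormedAddCommGroup H] [InnerProductSpace ℂ H] [CompleteSpace H]
    (A₁ A₂ B₁ B₂ : H →L[ℂ] H)
    (h₁pos : A₁.IsPositive) (h₁le : (1 - A₁).IsPositive)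
    (h₂pos : A₂.IsPositive) (h₂le : (1 - A₂).IsPositive)
    (hB₁pos : B₁.IsPositive) (hB₁sq : B₁ ∘L B₁ = A₁ ∘L (1 - A₁))
    (hB₂pos : B₂.IsPositive) (hB₂sq : B₂ ∘L B₂ = A₂ ∘L (1 - A₂))
    (hcond₁ : A₁ ∘L A₂ + B₁ ∘L B₂ = A₂ ∘L A₁ + B₂ ∘L B₁)
    (hcond₂ : A₁ ∘L B₂ + B₁ ∘L (1 - A₂) = A₂ ∘L B₁ + B₂ ∘L (1 - A₁)) :
    EffectCompatible A₁ A₂ :=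
  effects_compatible_of_commuting_canonical_dilations_general h₁pos.isSelfAdjoint
    h₂pos.isSelfAdjoint hB₁pos.isSelfAdjoint hB₂pos.isSelfAdjoint
    (commute_of_isPositive_of_mul_self_eq hB₁pos hB₁sq)
    (commute_of_isPositive_of_mul_self_eq hB₂pos hB₂sq) hB₁sq hB₂sq hcond₁ hcond₂
end
end

section
/- Let g, ψ ∈ L²(ℝ, ℂ). Then ∫_{ℝ²} |∫_ℝ e^{−ip(x−q)} conj(g(x−q)) ψ(x) dx|² d(q,p) = 2π ‖g‖₂² ‖ψ‖₂², where the outer integral is with respect to Lebesgue measure on ℝ² (both sides possibly interpreted as extended reals). Equivalently, the map ψ ↦ ((q,p) ↦ (2π)^{−1/2} ⟨U_{q,p} g, ψ⟩) is an isometry of L²(ℝ) into L²(ℝ²) whenever ‖g‖₂ = 1. -/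
open MeasureTheory

noncomputable section

/-!
For fixed `q`, the function `p ↦ ⟨U_{q,p} g, ψ⟩` is, up to a phase and the rescaling `p = 2π w`,
the Fourier transform of `h_q(x) = conj (g (x - q)) ψ(x)`. This function is integrable because
`g, ψ ∈ L²`, and for almost every `q` it is also square integrable, since by Tonelli and translation
invariance `∫∫ |h_q(x)|² dx dq = ‖g‖² ‖ψ‖²`. Plancherel's theorem in `p`, followed by integration
over `q`, gives the identity; the rescaling contributes one factor `2π` per dimension.
-/

open Module Complex
open scoped FourierTransform SchwartzMap ContDiff ENNReal RealInnerProductSpace ComplexConjugate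

lemma ofReal_norm_pow {E : Type*} [SeminormedAddGroup E] (v : E) (n : ℕ) :
    ENNReal.ofReal (‖v‖ ^ n) = ‖v‖ₑ ^ n := by
  rw [ENNReal.ofReal_pow (norm_nonneg v), ofReal_norm]

lemma eLpNorm_two_sq_eq_lintegral {α E : Type*} [MeasurableSpace α] [ENorm E]
    (f : α → E) (μ : Measure α) : eLpNorm f 2 μ ^ 2 = ∫⁻ x, ‖f x‖ₑ ^ 2 ∂μ := by
  simpa using eLpNorm_nnreal_pow_eq_lintegral (μ := μ) (f := f) (p := 2) two_ne_zero

lemma lintegral_comp_inv_smul {E : Type*} [NormedAddCommGroup E] [NormedSpace ℝ E]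
    [FiniteDimensional ℝ E] [MeasurableSpace E] [BorelSpace E] (μ : Measure E)
    [μ.IsAddHaarMeasure] (f : E → ℝ≥0∞) {r : ℝ} (hr : r ≠ 0) :
    ∫⁻ x, f (r⁻¹ • x) ∂μ = ENNReal.ofReal |r ^ finrank ℝ E| * ∫⁻ x, f x ∂μ := by
  calc ∫⁻ x, f (r⁻¹ • x) ∂μ = ∫⁻ x, f x ∂μ.map (r⁻¹ • ·) :=
        (lintegral_map_equiv f
          (Homeomorph.smulOfNeZero r⁻¹ (inv_ne_zero hr)).toMeasurableEquiv).symm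
    _ = ENNReal.ofReal |r ^ finrank ℝ E| * ∫⁻ x, f x ∂μ := by
        rw [Measure.map_addHaar_smul μ (inv_ne_zero hr), lintegral_smul_measure, inv_pow, inv_inv,
          smul_eq_mul]

lemma lintegral_lintegral_sub_mul {G : Type*} [AddGroup G] [MeasurableSpace G] [MeasurableAdd₂ G]
    [MeasurableNeg G] {μ : Measure G} [SFinite μ] [μ.IsAddLeftInvariant] [μ.IsNegInvariant]
    {f g : G → ℝ≥0∞} (hf : AEMeasurable f μ) (hg : AEMeasurable g μ) :
    ∫⁻ y, ∫⁻ x, f (x - y) * g x ∂μ ∂μ = (∫⁻ x, f x ∂μ) * ∫⁻ x, g x ∂μ := by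
  have hfg : AEMeasurable (fun z : G × G ↦ f (z.1 - z.2) * g z.1) (μ.prod μ) :=
    (hf.comp_quasiMeasurePreserving (quasiMeasurePreserving_sub μ μ)).mul hg.comp_fst
  have inner_integral (x : G) : ∫⁻ y, f (x - y) * g x ∂μ = (∫⁻ y, f y ∂μ) * g x := by
    have hf_sub : AEMeasurable (fun y ↦ f (x - y)) μ :=
      hf.comp_quasiMeasurePreserving (quasiMeasurePreserving_sub_left μ x)
    rw [lintegral_mul_const'' _ hf_sub, lintegral_sub_left_eq_self f x]
  rw [lintegral_lintegral_swap hfg.prod_swap, lintegral_congr inner_integral,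
    lintegral_const_mul'' _ hg]

lemma ae_eq_of_integral_schwartzMap_smul_eq {E F : Type*} [NormedAddCommGroup E] [NormedSpace ℝ E]
    [FiniteDimensional ℝ E] [MeasurableSpace E] [BorelSpace E] [NormedAddCommGroup F]
    [NormedSpace ℂ F] [CompleteSpace F] {μ : Measure E} {f f' : E → F}
    (hf : LocallyIntegrable f μ) (hf' : LocallyIntegrable f' μ)
    (h : ∀ φ : 𝓢(E, ℂ), ∫ x, φ x • f x ∂μ = ∫ x, φ x • f' x ∂μ) : f =ᵐ[μ] f' := by
  refine ae_eq_of_integral_contDiff_smul_eq hf hf' fun u u_smooth u_supp ↦ ?_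
  have supp_ofReal : HasCompactSupport (ofRealCLM ∘ u) := u_supp.comp_left rfl
  have smooth_ofReal : ContDiff ℝ ∞ (ofRealCLM ∘ u) := by fun_prop
  simpa using h (supp_ofReal.toSchwartzMap smooth_ofReal)

section Plancherel

variable {V F : Type*} [NormedAddCommGroup V] [InnerProductSpace ℝ V] [FiniteDimensional ℝ V]
  [MeasurableSpace V] [BorelSpace V] [NormedAddCommGroup F]

lemma continuous_fourier_of_integrable [NormedSpace ℂ F] {f : V → F} (hf : Integrable f) :
    Continuous (𝓕 f) :=
  VectorFourier.fourierIntegral_continuous Real.continuous_fourierChar continuous_inner hf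

lemma integral_fourier_smul_eq_of_integrable [NormedSpace ℂ F] [CompleteSpace F] {φ : V → ℂ}
    {f : V → F} (hφ : Integrable φ) (hf : Integrable f) :
    ∫ ξ, 𝓕 φ ξ • f ξ = ∫ x, φ x • 𝓕 f x := by
  have h := VectorFourier.integral_fourierIntegral_smul_eq_flip (L := innerₗ V)
    Real.continuous_fourierChar continuous_inner hφ hf
  rwa [flip_innerₗ] at h

variable [InnerProductSpace ℂ F] [CompleteSpace F] {f : V → F}

lemma coeFn_fourier_toLp (hf₁ : Integrable f) (hf₂ : MemLp f 2) :
    (𝓕 (hf₂.toLp f) : Lp F 2 (volume : Measure V)) =ᵐ[volume] 𝓕 f := by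
  refine ae_eq_of_integral_schwartzMap_smul_eq ((Lp.memLp _).locallyIntegrable one_le_two)
    (continuous_fourier_of_integrable hf₁).locallyIntegrable fun φ ↦ ?_
  have distributional : ∫ x, 𝓕 φ x • hf₂.toLp f x =
      ∫ x, φ x • (𝓕 (hf₂.toLp f) : Lp F 2 (volume : Measure V)) x := by
    simpa only [TemperedDistribution.fourier_apply, Lp.toTemperedDistribution_apply] using
      DFunLike.congr_fun (Lp.fourier_toTemperedDistribution_eq (hf₂.toLp f)) φ
  calc ∫ x, φ x • (𝓕 (hf₂.toLp f) : Lp F 2 (volume : Measure V)) x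
      = ∫ x, 𝓕 φ x • hf₂.toLp f x := distributional.symm
    _ = ∫ x, 𝓕 φ x • f x :=
        integral_congr_ae (hf₂.coeFn_toLp.mono fun x hx ↦ congrArg (𝓕 φ x • ·) hx)
    _ = ∫ x, φ x • 𝓕 f x := integral_fourier_smul_eq_of_integrable φ.integrable hf₁

lemma eLpNorm_fourier_eq (hf₁ : Integrable f) (hf₂ : MemLp f 2) :
    eLpNorm (𝓕 f) 2 volume = eLpNorm f 2 volume := by
  rw [← eLpNorm_congr_ae (coeFn_fourier_toLp hf₁ hf₂), ← eLpNorm_congr_ae hf₂.coeFn_toLp,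
    ← Lp.enorm_def, ← Lp.enorm_def, ← ofReal_norm, ← ofReal_norm, Lp.norm_fourier_eq]

end Plancherel

section WeylTransform

variable {V F : Type*} [NormedAddCommGroup V] [MeasurableSpace V] [BorelSpace V]
  [NormedAddCommGroup F]

/-- The function `x ↦ conj (g (x - q)) ψ(x)`: the signal `ψ` seen through the window `g` translated
to `q`. Its Fourier transform is, up to phase and scaling, the Weyl transform at position `q`. -/
def windowed [NormedSpace ℂ F] (g : V → ℂ) (ψ : V → F) (q x : V) : F :=
  conj (g (x - q)) • ψ x

/-- The unnormalised Weyl transform `(q, p) ↦ ⟨U_{q,p} g, ψ⟩` on phase space, where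
`(U_{q,p} g)(x) = e^{i⟪p, x - q⟫} g(x - q)`. The wave function `ψ` may be vector valued; the window
`g` is scalar. -/
def weylTransform [InnerProductSpace ℝ V] [FiniteDimensional ℝ V] [NormedSpace ℂ F]
    (g : V → ℂ) (ψ : V → F) (z : V × V) : F :=
  ∫ x, exp (-(I * ⟪z.2, x - z.1⟫)) • windowed g ψ z.1 x

variable [InnerProductSpace ℝ V] [FiniteDimensional ℝ V] {g : V → ℂ} {ψ : V → F}

section NormedSpace

variable [NormedSpace ℂ F]

lemma aestronglyMeasurable_uncurry_windowed (hg : AEStronglyMeasurable g)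
    (hψ : AEStronglyMeasurable ψ) :
    AEStronglyMeasurable (Function.uncurry (windowed g ψ)) := by
  have translate : AEStronglyMeasurable fun z : V × V ↦ g (z.2 - z.1) :=
    (hg.comp_quasiMeasurePreserving (quasiMeasurePreserving_sub volume volume)).prod_swap
  exact (continuous_conj.comp_aestronglyMeasurable translate).smul hψ.comp_snd

lemma integrable_windowed (hg : MemLp g 2) (hψ : MemLp ψ 2) (q : V) :
    Integrable (windowed g ψ q) :=
  memLp_one_iff_integrable.1 <|
    hψ.smul (hg.comp_measurePreserving (measurePreserving_sub_right volume q)).star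

lemma lintegral_lintegral_enorm_windowed_sq (hg : AEStronglyMeasurable g)
    (hψ : AEStronglyMeasurable ψ) :
    ∫⁻ q, ∫⁻ x, ‖windowed g ψ q x‖ₑ ^ 2 = eLpNorm g 2 volume ^ 2 * eLpNorm ψ 2 volume ^ 2 := by
  simp only [windowed, enorm_smul, RCLike.enorm_conj, mul_pow, eLpNorm_two_sq_eq_lintegral]
  exact lintegral_lintegral_sub_mul (hg.enorm.pow_const 2) (hψ.enorm.pow_const 2)

lemma ae_memLp_windowed (hg : MemLp g 2) (hψ : MemLp ψ 2) :
    ∀ᵐ q, MemLp (windowed g ψ q) 2 := by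
  have finite_integral : ∫⁻ q, ∫⁻ x, ‖windowed g ψ q x‖ₑ ^ 2 ≠ ⊤ := by
    rw [lintegral_lintegral_enorm_windowed_sq hg.1 hψ.1]
    exact ENNReal.mul_ne_top (ENNReal.pow_ne_top hg.2.ne) (ENNReal.pow_ne_top hψ.2.ne)
  have measurable_sections : AEMeasurable fun q ↦ ∫⁻ x, ‖windowed g ψ q x‖ₑ ^ 2 :=
    ((aestronglyMeasurable_uncurry_windowed hg.1 hψ.1).enorm.pow_const 2).lintegral_prod_right'
  filter_upwards [ae_lt_top' measurable_sections finite_integral] with q hq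
  rw [← eLpNorm_two_sq_eq_lintegral] at hq
  exact ⟨(integrable_windowed hg hψ q).1, (ENNReal.pow_lt_top_iff.1 hq).resolve_right two_ne_zero⟩

lemma aestronglyMeasurable_weylTransform (hg : AEStronglyMeasurable g)
    (hψ : AEStronglyMeasurable ψ) : AEStronglyMeasurable (weylTransform g ψ) := by
  have phase : Continuous fun y : (V × V) × V ↦ exp (-(I * ⟪y.1.2, y.2 - y.1.1⟫)) := by fun_prop
  have window : AEStronglyMeasurable fun y : (V × V) × V ↦ windowed g ψ y.1.1 y.2 :=
    (aestronglyMeasurable_uncurry_windowed hg hψ).comp_quasiMeasurePreserving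
      (QuasiMeasurePreserving.prodMap Measure.quasiMeasurePreserving_fst (.id volume))
  exact (phase.aestronglyMeasurable.smul window).integral_prod_right'

lemma weylTransform_eq_smul_fourier (g : V → ℂ) (ψ : V → F) (q p : V) :
    weylTransform g ψ (q, p) =
      exp (⟪p, q⟫ * I) • 𝓕 (windowed g ψ q) ((2 * Real.pi)⁻¹ • p) := by
  rw [weylTransform, Real.fourier_eq', ← integral_smul]
  congr 1 with x
  rw [smul_smul, ← Complex.exp_add, inner_sub_right, inner_smul_right, real_inner_comm p x]
  congr 2
  push_cast
  field_simp
  ring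

lemma weylTransform_real_apply (g ψ : ℝ → ℂ) (z : ℝ × ℝ) :
    weylTransform g ψ z =
      ∫ x : ℝ, exp (-(I * z.2 * (x - z.1))) * conj (g (x - z.1)) * ψ x := by
  simp only [weylTransform, windowed, smul_eq_mul, RCLike.inner_apply', conj_trivial, ofReal_mul,
    ofReal_sub, mul_assoc]

end NormedSpace

variable [InnerProductSpace ℂ F] [CompleteSpace F]

lemma lintegral_enorm_weylTransform_sq {q : V} (h₁ : Integrable (windowed g ψ q))
    (h₂ : MemLp (windowed g ψ q) 2) :
    ∫⁻ p, ‖weylTransform g ψ (q, p)‖ₑ ^ 2 =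
      ENNReal.ofReal ((2 * Real.pi) ^ finrank ℝ V) * ∫⁻ x, ‖windowed g ψ q x‖ₑ ^ 2 := by
  have enorm_eq (p : V) : ‖weylTransform g ψ (q, p)‖ₑ =
      ‖𝓕 (windowed g ψ q) ((2 * Real.pi)⁻¹ • p)‖ₑ := by
    rw [weylTransform_eq_smul_fourier, enorm_smul, ← ofReal_norm (exp _), norm_exp_ofReal_mul_I,
      ENNReal.ofReal_one, one_mul]
  simp only [enorm_eq]
  rw [lintegral_comp_inv_smul volume (fun w ↦ ‖𝓕 (windowed g ψ q) w‖ₑ ^ 2) Real.two_pi_pos.ne',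
    ← eLpNorm_two_sq_eq_lintegral, eLpNorm_fourier_eq h₁ h₂, eLpNorm_two_sq_eq_lintegral,
    abs_of_pos (pow_pos Real.two_pi_pos _)]

theorem weyl_transform_isometry_general (hg : MemLp g 2) (hψ : MemLp ψ 2) :
    ∫⁻ z, ‖weylTransform g ψ z‖ₑ ^ 2 =
      ENNReal.ofReal ((2 * Real.pi) ^ finrank ℝ V) *
        (eLpNorm g 2 volume ^ 2 * eLpNorm ψ 2 volume ^ 2) := by
  calc ∫⁻ z, ‖weylTransform g ψ z‖ₑ ^ 2
      = ∫⁻ q, ∫⁻ p, ‖weylTransform g ψ (q, p)‖ₑ ^ 2 :=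
        lintegral_prod _ ((aestronglyMeasurable_weylTransform hg.1 hψ.1).enorm.pow_const 2)
    _ = ∫⁻ q, ENNReal.ofReal ((2 * Real.pi) ^ finrank ℝ V) * ∫⁻ x, ‖windowed g ψ q x‖ₑ ^ 2 :=
        lintegral_congr_ae <| (ae_memLp_windowed hg hψ).mono fun q hq ↦
          lintegral_enorm_weylTransform_sq (integrable_windowed hg hψ q) hq
    _ = ENNReal.ofReal ((2 * Real.pi) ^ finrank ℝ V) *
          (eLpNorm g 2 volume ^ 2 * eLpNorm ψ 2 volume ^ 2) := by
        rw [lintegral_const_mul' _ _ ENNReal.ofReal_ne_top,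
          lintegral_lintegral_enorm_windowed_sq hg.1 hψ.1]

end WeylTransform

/-- For `g, ψ ∈ L²(ℝ)`,
`∫_{ℝ²} |⟨U_{q,p} g, ψ⟩|² d(q,p) = 2π ‖g‖₂² ‖ψ‖₂²`, where
`⟨U_{q,p} g, ψ⟩ = ∫ e^{−ip(x−q)} conj(g(x−q)) ψ(x) dx`. In particular,
`ψ ↦ (2π)^{−1/2} ⟨U_{q,p} g, ψ⟩` is an isometry of `L²(ℝ)` into `L²(ℝ²)` when `‖g‖₂ = 1`. -/
theorem weyl_transform_isometry (g ψ : Lp ℂ 2 (volume : Measure ℝ)) :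
    ∫⁻ z : ℝ × ℝ, ENNReal.ofReal
        (‖∫ x : ℝ, Complex.exp (-(Complex.I * (z.2 : ℂ) * ((x : ℂ) - (z.1 : ℂ)))) *
            (starRingEnd ℂ) (g (x - z.1)) * ψ x‖ ^ 2) =
      ENNReal.ofReal (2 * Real.pi * ‖g‖ ^ 2 * ‖ψ‖ ^ 2) := by
  rw [mul_assoc, ENNReal.ofReal_mul Real.two_pi_pos.le, ENNReal.ofReal_mul (sq_nonneg _)]
  simpa only [weylTransform_real_apply, ofReal_norm_pow, finrank_self, pow_one, ← Lp.enorm_def]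
    using weyl_transform_isometry_general (Lp.memLp g) (Lp.memLp ψ)
end
end
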